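/- Let J₀ be a two-sided p-periodic Jacobi matrix with discriminant Δ_{J₀} and isospectral torus T_{J₀}, and let J = J(a,b) be an arbitrary two-sided Jacobi operator (bounded parameters, a_n > 0, not assumed periodic). Then Δ_{J₀}(J) = S^p + S^{−p} as bounded operators on ℓ²(ℤ) if and only if (a,b) ∈ T_{J₀}, that is, if and only if a and b are p-periodic and Δ_{(a,b)} = Δ_{J₀}. -/

import Mathlib

open scoped ComplexConjugate

noncomputable section

/-- The two-sided Hilbert space `ℓ²(ℤ)`. -/
abbrev HZ : Type := lp (fun _ : ℤ => ℂ) 2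

/-- The transfer matrix `Λ_n(x) = (1/a_n)·[[x − b_n, −1], [a_n², 0]]`
as a 2×2 matrix over `ℝ[x]`. -/
def lamMat (a b : ℤ → ℝ) (n : ℤ) : Matrix (Fin 2) (Fin 2) (Polynomial ℝ) :=
  Polynomial.C (a n)⁻¹ • !![Polynomial.X - Polynomial.C (b n), -1;
    Polynomial.C ((a n) ^ 2), 0]

/-- The ordered product `Λ_n ⋯ Λ_2 Λ_1`. -/
def tMat (a b : ℤ → ℝ) : ℕ → Matrix (Fin 2) (Fin 2) (Polynomial ℝ)
  | 0 => 1
  | n + 1 => lamMat a b ((n : ℤ) + 1) * tMat a b n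

/-- The discriminant `Δ_{(a,b)}(x) = Tr(Λ_p(x) ⋯ Λ_1(x))` of `p`-periodic Jacobi
parameters. -/
def disc (a b : ℤ → ℝ) (p : ℕ) : Polynomial ℝ := Matrix.trace (tMat a b p)

/-- Evaluation of a real polynomial at a bounded operator. -/
def polyOp (q : Polynomial ℝ) (A : HZ →L[ℂ] HZ) : HZ →L[ℂ] HZ :=
  Polynomial.aeval A (q.map (algebraMap ℝ ℂ))

/-- Membership in the isospectral torus of the `p`-periodic Jacobi matrix with
parameters `(a₀,b₀)`: the parameters `(a',b')` are positive, `p`-periodic, and have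
the same discriminant. -/
def InTorus (p : ℕ) (a0 b0 a' b' : ℤ → ℝ) : Prop :=
  (∀ n, 0 < a' n) ∧ Function.Periodic a' (p : ℤ) ∧ Function.Periodic b' (p : ℤ) ∧
    disc a' b' p = disc a0 b0 p

/-- The standard basis vectors of `ℓ²(ℤ)`. -/
def eB (n : ℤ) : HZ := lp.single 2 n (1 : ℂ)

lemma eB_apply (n m : ℤ) : (eB n : HZ) m = if m = n then (1 : ℂ) else 0 := by
  unfold eB
  rw [lp.coeFn_single]
  by_cases h : m = n
  · subst h; simp
  · simp [h]

lemma clm_eq_zero_of_eB (D : HZ →L[ℂ] HZ) (h : ∀ n, D (eB n) = 0) : D = 0 := by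
  ext1 u
  have hs := lp.hasSum_single (E := fun _ : ℤ => ℂ) (p := 2) (by simp) u
  have h2 := D.hasSum hs
  have h3 : ∀ n : ℤ, D (lp.single 2 n (u n)) = 0 := by
    intro n
    have : (lp.single 2 n (u n) : HZ) = (u n) • eB n := by
      unfold eB
      rw [← lp.single_smul]; simp
    rw [this, map_smul, h n, smul_zero]
  have h4 : HasSum (fun n : ℤ => D (lp.single 2 n (u n))) 0 := by
    simp only [h3]; exact hasSum_zero
  exact h2.unique h4

lemma adj_apply (S : HZ →L[ℂ] HZ) (hS : ∀ (u : HZ) (n : ℤ), (S u) n = u (n - 1))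
    (u : HZ) (n : ℤ) : (ContinuousLinearMap.adjoint S u) n = u (n + 1) := by
  have hSe : S (eB n) = eB (n + 1) := by
    ext m
    rw [hS, eB_apply, eB_apply]
    congr 1
    apply propext; constructor <;> intro h <;> omega
  have key := ContinuousLinearMap.adjoint_inner_right S (eB n) u
  rw [hSe] at key
  unfold eB at key
  rw [lp.inner_single_left, lp.inner_single_left] at key
  simpa using key

lemma S_pow_apply (S : HZ →L[ℂ] HZ) (hS : ∀ (u : HZ) (n : ℤ), (S u) n = u (n - 1))
    (k : ℕ) (u : HZ) (n : ℤ) : ((S ^ k) u) n = u (n - k) := by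
  induction k generalizing n with
  | zero => simp
  | succ k ih =>
    rw [pow_succ', mul_apply_eq_comp, hS, ih]
    push_cast; ring_nf

lemma Sadj_pow_apply (S : HZ →L[ℂ] HZ) (hS : ∀ (u : HZ) (n : ℤ), (S u) n = u (n - 1))
    (k : ℕ) (u : HZ) (n : ℤ) : ((ContinuousLinearMap.adjoint S ^ k) u) n = u (n + k) := by
  induction k generalizing n with
  | zero => simp
  | succ k ih =>
    rw [pow_succ', mul_apply_eq_comp, adj_apply S hS, ih]
    push_cast; ring_nf

/-- Evaluation at `J` as a ring homomorphism. -/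
def phi (J : HZ →L[ℂ] HZ) : Polynomial ℝ →+* (HZ →L[ℂ] HZ) :=
  ((Polynomial.aeval J : Polynomial ℂ →ₐ[ℂ] (HZ →L[ℂ] HZ)) : Polynomial ℂ →+* _).comp
    (Polynomial.mapRingHom (algebraMap ℝ ℂ))

lemma phi_eq (J : HZ →L[ℂ] HZ) (q : Polynomial ℝ) : phi J q = polyOp q J := rfl

lemma phi_X (J : HZ →L[ℂ] HZ) : phi J Polynomial.X = J := by
  simp [phi]

lemma phi_C (J : HZ →L[ℂ] HZ) (r : ℝ) (u : HZ) :
    phi J (Polynomial.C r) u = (r : ℂ) • u := by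
  simp [phi, Algebra.algebraMap_eq_smul_one]
  rfl

lemma phi_comm (J B : HZ →L[ℂ] HZ) (h : Commute J B) (q : Polynomial ℝ) :
    Commute (phi J q) B := by
  rw [phi_eq, polyOp]
  induction (q.map (algebraMap ℝ ℂ)) using Polynomial.induction_on' with
  | add f g hf hg => rw [map_add]; exact hf.add_left hg
  | monomial n c =>
    rw [Polynomial.aeval_monomial]
    exact (Algebra.commute_algebraMap_left c B).mul_left (h.pow_left n)

lemma J_eB (a b : ℤ → ℝ) (J : HZ →L[ℂ] HZ)
    (hJ : ∀ (u : HZ) (n : ℤ),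
      (J u) n = (a (n - 1) : ℂ) * u (n - 1) + (b n : ℂ) * u n + (a n : ℂ) * u (n + 1))
    (n : ℤ) : J (eB n) = (a (n - 1) : ℂ) • eB (n - 1) + (b n : ℂ) • eB n
      + (a n : ℂ) • eB (n + 1) := by
  ext m
  rw [hJ]
  simp only [lp.coeFn_add, lp.coeFn_smul, Pi.add_apply, Pi.smul_apply, eB_apply, smul_eq_mul]
  by_cases h1 : m = n
  · subst h1; simp [show ¬ (m = m - 1) by omega]
  by_cases h2 : m = n + 1
  · subst h2; simp [show ¬ (n + 1 + 1 = n) by omega, show ¬ (n + 1 = n - 1) by omega]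
  by_cases h3 : m = n - 1
  · subst h3; simp [show ¬ (n - 1 - 1 = n) by omega, show ¬ (n - 1 = n + 1) by omega]
  simp [h1, h2, h3, show ¬ (m - 1 = n) by omega, show ¬ (m + 1 = n) by omega]

lemma tMat_det (a b : ℤ → ℝ) (hpos : ∀ n : ℤ, 0 < a n) (k : ℕ) : (tMat a b k).det = 1 := by
  induction k with
  | zero => simp [tMat]
  | succ k ih =>
    rw [tMat, Matrix.det_mul, ih, mul_one, lamMat, Matrix.det_smul, Matrix.det_fin_two]
    have := (hpos ((k : ℤ) + 1)).ne'
    simp only [Fintype.card_fin, Matrix.of_apply, Matrix.cons_val', Matrix.cons_val_zero,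
      Matrix.cons_val_one, Matrix.cons_val_fin_one]
    rw [mul_zero, zero_sub, neg_one_mul, neg_neg, ← map_pow, ← map_mul]
    rw [← mul_pow, inv_mul_cancel₀ this, one_pow, map_one]

lemma tMat_rec (a b : ℤ → ℝ) (hpos : ∀ n : ℤ, 0 < a n) (J : HZ →L[ℂ] HZ)
    (hJ : ∀ (u : HZ) (n : ℤ),
      (J u) n = (a (n - 1) : ℂ) * u (n - 1) + (b n : ℂ) * u n + (a n : ℂ) * u (n + 1))
    (k : ℕ) :
    eB ((k : ℤ) + 1) = phi J (tMat a b k 0 0) (eB 1)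
        + phi J (tMat a b k 0 1) ((a 0 : ℂ) • eB 0) ∧
    (a k : ℂ) • eB k = phi J (tMat a b k 1 0) (eB 1)
        + phi J (tMat a b k 1 1) ((a 0 : ℂ) • eB 0) := by
  induction k with
  | zero => simp [tMat]
  | succ k ih =>
    obtain ⟨h1, h2⟩ := ih
    have hne : (a ((k : ℤ) + 1) : ℂ) ≠ 0 := by exact_mod_cast (hpos _).ne'
    have hj := J_eB a b J hJ ((k : ℤ) + 1)
    rw [show (k : ℤ) + 1 - 1 = k by ring] at hj
    have e0 : ∀ j, tMat a b (k + 1) 0 j = Polynomial.C (a ((k : ℤ) + 1))⁻¹ *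
        ((Polynomial.X - Polynomial.C (b ((k : ℤ) + 1))) * tMat a b k 0 j - tMat a b k 1 j) := by
      intro j
      simp [tMat, lamMat, Matrix.mul_apply, Fin.sum_univ_two]
      ring
    have e1 : ∀ j, tMat a b (k + 1) 1 j = Polynomial.C (a ((k : ℤ) + 1)) * tMat a b k 0 j := by
      intro j
      have := (hpos ((k : ℤ) + 1)).ne'
      have h5 : Polynomial.C (a ((k : ℤ) + 1))⁻¹ * Polynomial.C ((a ((k : ℤ) + 1)) ^ 2)
          = Polynomial.C (a ((k : ℤ) + 1)) := by
        rw [← map_mul]; congr 1; field_simp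
      rw [← h5]
      simp [tMat, lamMat, Matrix.mul_apply, Fin.sum_univ_two]
    push_cast
    constructor
    · rw [e0, e0]
      simp only [map_mul, map_sub, mul_apply_eq_comp, ContinuousLinearMap.sub_apply,
        phi_X, phi_C]
      have : (a ((k : ℤ) + 1) : ℂ) • eB ((k : ℤ) + 1 + 1)
          = J (eB ((k : ℤ) + 1)) - (b ((k : ℤ) + 1) : ℂ) • eB ((k : ℤ) + 1)
            - (a k : ℂ) • eB k := by
        rw [hj]; abel
      rw [h2] at this
      rw [← inv_smul_smul₀ hne (eB ((k : ℤ) + 1 + 1)), this, h1]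
      push_cast
      simp only [map_add, smul_add, smul_sub]
      abel
    · rw [e1, e1]
      simp only [map_mul, mul_apply_eq_comp, phi_C]
      rw [h1, smul_add]

lemma periodic_formula (p : ℕ) (a b : ℤ → ℝ) (hpos : ∀ n : ℤ, 0 < a n)
    (hpera : Function.Periodic a (p : ℤ)) (hperb : Function.Periodic b (p : ℤ))
    (J : HZ →L[ℂ] HZ)
    (hJ : ∀ (u : HZ) (n : ℤ),
      (J u) n = (a (n - 1) : ℂ) * u (n - 1) + (b n : ℂ) * u n + (a n : ℂ) * u (n + 1))
    (S : HZ →L[ℂ] HZ)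
    (hS : ∀ (u : HZ) (n : ℤ), (S u) n = u (n - 1)) :
    phi J (disc a b p) = S ^ p + (ContinuousLinearMap.adjoint S) ^ p := by
  set R := (ContinuousLinearMap.adjoint S) ^ p with hR
  have hRa : ∀ (u : HZ) (n : ℤ), (R u) n = u (n + p) := Sadj_pow_apply S hS p
  have hSa : ∀ (u : HZ) (n : ℤ), ((S ^ p) u) n = u (n - p) := S_pow_apply S hS p
  have hRe : ∀ n, R (eB n) = eB (n - p) := by
    intro n; ext m
    rw [hRa, eB_apply, eB_apply]
    congr 1; apply propext; constructor <;> intro h <;> omega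
  have hSe : ∀ n, (S ^ p) (eB n) = eB (n + p) := by
    intro n; ext m
    rw [hSa, eB_apply, eB_apply]
    congr 1; apply propext; constructor <;> intro h <;> omega
  have cR : Commute J R := by
    ext u n
    simp only [mul_apply_eq_comp]
    rw [hJ, hRa, hRa, hRa, hRa, hJ, hpera n, hperb n,
      show n + (p : ℤ) - 1 = n - 1 + p by ring, hpera (n - 1),
      show n + (p : ℤ) + 1 = n + 1 + p by ring]
  have cS : Commute J (S ^ p) := by
    ext u n
    simp only [mul_apply_eq_comp]
    rw [hJ, hSa, hSa, hSa, hSa, hJ, hpera.sub_eq, hperb.sub_eq,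
      show n - (p : ℤ) - 1 = n - 1 - p by ring, hpera.sub_eq,
      show n - (p : ℤ) + 1 = n + 1 - p by ring]
  obtain ⟨h1, h2⟩ := tMat_rec a b hpos J hJ p
  have hdet := tMat_det a b hpos p
  rw [Matrix.det_fin_two] at hdet
  have hap : a p = a 0 := by simpa using hpera 0
  rw [hap] at h2
  have h0 : (a 0 : ℂ) ≠ 0 := by exact_mod_cast (hpos _).ne'
  have hdisc : disc a b p = tMat a b p 0 0 + tMat a b p 1 1 := by
    rw [disc, Matrix.trace_fin_two]
  generalize tMat a b p 0 0 = t00 at *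
  generalize tMat a b p 0 1 = t01 at *
  generalize tMat a b p 1 0 = t10 at *
  generalize tMat a b p 1 1 = t11 at *
  have sw : ∀ (q : Polynomial ℝ) (u : HZ), R (phi J q u) = phi J q (R u) := by
    intro q u
    have := (phi_comm J R cR q).eq
    exact (DFunLike.congr_fun this u).symm
  have g1 := congrArg R h1
  have g2 := congrArg R h2
  simp only [map_add, sw, map_smul, hRe] at g1 g2 h1 h2
  rw [show (p : ℤ) + 1 - p = 1 by ring] at g1
  rw [show (p : ℤ) - p = 0 by ring] at g2
  have mm : ∀ (q r : Polynomial ℝ) (u : HZ), phi J q (phi J r u) = phi J (q * r) u := by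
    intro q r u; rw [map_mul]; rfl
  have one : ∀ u : HZ, phi J (t00 * t11 - t01 * t10) u = u := by
    intro u; rw [hdet]; simp
  have one' : ∀ u : HZ, phi J (t00 * t11) u = u + phi J (t01 * t10) u := by
    intro u
    have := one u
    rw [map_sub, ContinuousLinearMap.sub_apply] at this
    exact sub_eq_iff_eq_add.mp this
  have k1 : eB (1 - p) = phi J t11 (eB 1) - (a 0 : ℂ) • phi J t01 (eB 0) := by
    rw [← map_smul (phi J t01), g2]
    rw [show phi J t11 (eB 1) = phi J t11 (phi J t00 (eB (1 - p))
      + (a 0 : ℂ) • phi J t01 (eB (0 - p))) from congrArg _ g1]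
    simp only [map_add, map_smul, mm]
    rw [mul_comm t11 t00, one', mul_comm t11 t01]
    abel
  have k0 : (a 0 : ℂ) • eB (0 - p) = phi J t00 ((a 0 : ℂ) • eB 0) - phi J t10 (eB 1) := by
    rw [g2]
    rw [show phi J t10 (eB 1) = phi J t10 (phi J t00 (eB (1 - p))
      + (a 0 : ℂ) • phi J t01 (eB (0 - p))) from congrArg _ g1]
    simp only [map_add, map_smul, mm]
    rw [one', mul_comm t10 t00, mul_comm t10 t01, smul_add]
    abel
  set D := phi J (disc a b p) - (S ^ p + R) with hD
  have cD : Commute J D := by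
    have : Commute J (phi J (disc a b p)) := (phi_comm J J (Commute.refl J) _).symm
    exact this.sub_right (cS.add_right cR)
  have D1 : D (eB 1) = 0 := by
    rw [hD, hdisc]
    simp only [map_add, ContinuousLinearMap.sub_apply, ContinuousLinearMap.add_apply, hSe, hRe]
    rw [k1, add_comm 1 (p : ℤ), h1]
    abel
  have D0 : D (eB 0) = 0 := by
    have : (a 0 : ℂ) • D (eB 0) = 0 := by
      rw [hD, hdisc]
      simp only [map_add, ContinuousLinearMap.sub_apply, ContinuousLinearMap.add_apply, hSe, hRe]
      rw [smul_sub, smul_add, smul_add, k0, zero_add, h2, map_smul]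
      abel
    exact (smul_eq_zero.mp this).resolve_left h0
  have hDJ : ∀ u, D (J u) = J (D u) := fun u => (DFunLike.congr_fun cD.eq u).symm
  have step : ∀ n, (a (n - 1) : ℂ) • D (eB (n - 1)) + (b n : ℂ) • D (eB n)
      + (a n : ℂ) • D (eB (n + 1)) = J (D (eB n)) := by
    intro n
    rw [← hDJ, J_eB a b J hJ n]
    simp only [map_add, map_smul]
  have up : ∀ k : ℕ, D (eB k) = 0 ∧ D (eB ((k : ℤ) + 1)) = 0 := by
    intro k
    induction k with
    | zero => exact ⟨by simpa using D0, by simpa using D1⟩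
    | succ k ih =>
      have hs := step ((k : ℤ) + 1)
      rw [show (k : ℤ) + 1 - 1 = k by ring, ih.1, ih.2] at hs
      simp only [smul_zero, zero_add, map_zero] at hs
      push_cast
      exact ⟨ih.2, (smul_eq_zero.mp hs).resolve_left (by exact_mod_cast (hpos _).ne')⟩
  have down : ∀ k : ℕ, D (eB (-(k : ℤ))) = 0 ∧ D (eB (-(k : ℤ) + 1)) = 0 := by
    intro k
    induction k with
    | zero => exact ⟨by simpa using D0, by simpa using D1⟩
    | succ k ih =>
      have hs := step (-(k : ℤ))
      rw [ih.1, ih.2] at hs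
      simp only [smul_zero, add_zero, map_zero] at hs
      push_cast
      rw [show -((k : ℤ) + 1) + 1 = -k by ring, show -((k : ℤ) + 1) = -k - 1 by ring]
      exact ⟨(smul_eq_zero.mp hs).resolve_left (by exact_mod_cast (hpos _).ne'), ih.1⟩
  have : D = 0 := by
    apply clm_eq_zero_of_eB
    intro n
    obtain ⟨k, rfl | rfl⟩ := n.eq_nat_or_neg
    · exact (up k).1
    · exact (down k).1
  exact sub_eq_zero.mp this

lemma J_pow_eB (a b : ℤ → ℝ) (hpos : ∀ n : ℤ, 0 < a n) (J : HZ →L[ℂ] HZ)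
    (hJ : ∀ (u : HZ) (n : ℤ),
      (J u) n = (a (n - 1) : ℂ) * u (n - 1) + (b n : ℂ) * u n + (a n : ℂ) * u (n + 1))
    (k : ℕ) : ((J ^ k) (eB 0)) (k : ℤ) ≠ 0 ∧ ∀ m : ℤ, (k : ℤ) < m → ((J ^ k) (eB 0)) m = 0 := by
  induction k with
  | zero =>
    refine ⟨by simp [eB_apply], fun m hm => ?_⟩
    have : m ≠ 0 := by simpa using hm.ne'
    simp [eB_apply, this]
  | succ k ih =>
    have hk : ∀ m, ((J ^ (k + 1)) (eB 0)) m = (a (m - 1) : ℂ) * ((J ^ k) (eB 0)) (m - 1)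
        + (b m : ℂ) * ((J ^ k) (eB 0)) m + (a m : ℂ) * ((J ^ k) (eB 0)) (m + 1) := by
      intro m
      rw [pow_succ', mul_apply_eq_comp, hJ]
    rw [Nat.cast_succ]
    constructor
    · rw [hk, ih.2 (k + 1) (by omega), ih.2 (k + 1 + 1) (by omega), show (k : ℤ) + 1 - 1 = k by ring]
      rw [mul_zero, mul_zero, add_zero, add_zero]
      exact mul_ne_zero (Complex.ofReal_ne_zero.mpr (hpos k).ne') ih.1
    · intro m hm
      rw [hk, ih.2 (m + 1) (by omega), ih.2 m (by omega), ih.2 (m - 1) (by omega)]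
      simp

lemma phi_inj (a b : ℤ → ℝ) (hpos : ∀ n : ℤ, 0 < a n) (J : HZ →L[ℂ] HZ)
    (hJ : ∀ (u : HZ) (n : ℤ),
      (J u) n = (a (n - 1) : ℂ) * u (n - 1) + (b n : ℂ) * u n + (a n : ℂ) * u (n + 1))
    (q : Polynomial ℝ) (h : phi J q = 0) : q = 0 := by
  by_contra hq
  have hsum : phi J q = ∑ i ∈ Finset.range (q.natDegree + 1), (q.coeff i : ℂ) • J ^ i := by
    rw [phi_eq, polyOp, Polynomial.aeval_eq_sum_range, Polynomial.natDegree_map]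
    simp
  have h2 : (phi J q (eB 0)) (q.natDegree : ℤ) = 0 := by rw [h]; simp
  rw [hsum, Finset.sum_range_succ, ContinuousLinearMap.add_apply, ContinuousLinearMap.sum_apply,
    lp.coeFn_add, Pi.add_apply, lp.coeFn_sum, Finset.sum_apply, Finset.sum_eq_zero, zero_add] at h2
  · simp only [ContinuousLinearMap.smul_apply, lp.coeFn_smul, Pi.smul_apply, smul_eq_mul] at h2
    rcases mul_eq_zero.mp h2 with h3 | h3
    · exact hq (Polynomial.leadingCoeff_eq_zero.mp (by exact_mod_cast h3))
    · exact (J_pow_eB a b hpos J hJ _).1 h3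
  · intro i hi
    simp only [ContinuousLinearMap.smul_apply, lp.coeFn_smul, Pi.smul_apply, smul_eq_mul]
    rw [(J_pow_eB a b hpos J hJ i).2 _ (by exact_mod_cast Finset.mem_range.mp hi), mul_zero]

/-- the magic formula for Jacobi matrices:
`Δ_{J₀}(J) = S^p + S^{−p}` iff `J` lies in the isospectral torus of `J₀`. -/
theorem statement1 (p : ℕ) (hp : 1 ≤ p)
    (a0 b0 : ℤ → ℝ) (ha0pos : ∀ n, 0 < a0 n)
    (hpera : Function.Periodic a0 (p : ℤ)) (hperb : Function.Periodic b0 (p : ℤ))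
    (a b : ℤ → ℝ) (hbdd : ∃ C : ℝ, ∀ n : ℤ, |a n| ≤ C ∧ |b n| ≤ C)
    (hpos : ∀ n : ℤ, 0 < a n)
    (J : HZ →L[ℂ] HZ)
    (hJ : ∀ (u : HZ) (n : ℤ),
      (J u) n = (a (n - 1) : ℂ) * u (n - 1) + (b n : ℂ) * u n + (a n : ℂ) * u (n + 1))
    (S : HZ →L[ℂ] HZ)
    (hS : ∀ (u : HZ) (n : ℤ), (S u) n = u (n - 1)) :
    polyOp (disc a0 b0 p) J = S ^ p + (ContinuousLinearMap.adjoint S) ^ p ↔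
      InTorus p a0 b0 a b := by
  rw [← phi_eq]
  constructor
  · intro h
    have hc : Commute J (S ^ p + (ContinuousLinearMap.adjoint S) ^ p) := by
      rw [← h]; exact (phi_comm J J (Commute.refl J) _).symm
    have hent : ∀ n m : ℤ, (J ((S ^ p) (eB n) + (ContinuousLinearMap.adjoint S ^ p) (eB n))) m
        = ((S ^ p) (J (eB n)) + (ContinuousLinearMap.adjoint S ^ p) (J (eB n)) : HZ) m := by
      intro n m
      have := DFunLike.congr_fun hc.eq (eB n)
      exact congrArg (fun v : HZ => v m) this
    simp only [hJ, lp.coeFn_add, Pi.add_apply, S_pow_apply S hS, Sadj_pow_apply S hS,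
      eB_apply] at hent
    have pa : Function.Periodic a (p : ℤ) := by
      intro n
      have := hent n (n + p + 1)
      simp only [show n + (p : ℤ) + 1 - 1 - p = n by ring,
        show ¬ (n + (p : ℤ) + 1 - 1 + p = n) by omega,
        show ¬ (n + (p : ℤ) + 1 - p = n) by omega,
        show ¬ (n + (p : ℤ) + 1 + p = n) by omega,
        show ¬ (n + (p : ℤ) + 1 + 1 - p = n) by omega,
        show ¬ (n + (p : ℤ) + 1 + 1 + p = n) by omega,
        show (n + (p : ℤ) + 1 - p - 1 = n) by ring,
        show ¬ (n + (p : ℤ) + 1 - p + 1 = n) by omega,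
        show ¬ (n + (p : ℤ) + 1 + p - 1 = n) by omega,
        show ¬ (n + (p : ℤ) + 1 + p + 1 = n) by omega,
        show n + (p : ℤ) + 1 - 1 = n + p by ring, if_true, if_false] at this
      simpa [show p ≠ 0 by omega, show ¬ (n + (p : ℤ) + p = n) by omega] using this
    have pb : Function.Periodic b (p : ℤ) := by
      intro n
      have := hent n (n + p)
      simp only [show ¬ (n + (p : ℤ) - 1 - p = n) by omega,
        show ¬ (n + (p : ℤ) - 1 + p = n) by omega,
        show (n + (p : ℤ) - p = n) by ring,
        show ¬ (n + (p : ℤ) + p = n) by omega,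
        show ¬ (n + (p : ℤ) + 1 - p = n) by omega,
        show ¬ (n + (p : ℤ) + 1 + p = n) by omega,
        show ¬ (n - 1 = n) by omega,
        show ¬ (n + 1 = n) by omega,
        show ¬ (n + (p : ℤ) + p - 1 = n) by omega,
        show ¬ (n + (p : ℤ) + p + 1 = n) by omega, if_true, if_false] at this
      simpa using this
    refine ⟨hpos, pa, pb, ?_⟩
    have h2 := periodic_formula p a b hpos pa pb J hJ S hS
    have h3 : phi J (disc a b p - disc a0 b0 p) = 0 := by
      rw [map_sub, h2, h, sub_self]
    exact sub_eq_zero.mp (phi_inj a b hpos J hJ _ h3)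
  · rintro ⟨-, pa, pb, hd⟩
    rw [← hd]
    exact periodic_formula p a b hpos pa pb J hJ S hS
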